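/- arXiv:2311.03665 — 9 statements merged into one kernel-verified Lean document; each statement's English description precedes it below -/
import Mathlib

section
/- Let G be a finite simple graph and k a natural number. Suppose (I, H, M) is a crown for the triangles of G, i.e.: I is a set of vertices of G such that no triangle of G contains two distinct vertices of I; H is exactly the set of edges of G that form a triangle together with some vertex of I; and M is an injective map from H to I such that for every edge uv in H, the vertex M(uv) is adjacent to both u and v (so {M(uv), u, v} is a triangle of G). If G has a triangle hitting set of size at most k, then G has a triangle hitting set F' of size at most k such that F' is disjoint from I and F' contains at least one endpoint of every edge of H. -/
/-! Exchange argument: given a hitting set `F`, discard its vertices in `I` and add one endpoint of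
every edge of `H` that `F` misses. If `F` misses the edge `e`, then `F` must meet the triangle
formed by `e` and `M e` in `M e`; as `M` is injective, `F` misses at most `|F ∩ I|` edges of `H`, so
the exchange does not increase the size. A triangle that `F` hits only in `I` has an edge of `H`
opposite to that vertex, and the new set meets this edge. -/

section TriangleCrown

variable {V : Type*} {G : SimpleGraph V} {I F F' : Set V} {H : Set (Sym2 V)} {M : Sym2 V → V}

/-- A triangle hitting set of `G`: a set of vertices meeting every triangle. -/
def IsTriangleHittingSet (G : SimpleGraph V) (F : Set V) : Prop :=
  ∀ t : Finset V, G.IsNClique 3 t → ∃ v ∈ t, v ∈ F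

/-- A crown `(I, H, M)` for the triangles of `G`. The matching `M` is a total function on `Sym2 V`
of which only the values on `H` matter. -/
structure IsTriangleCrown (G : SimpleGraph V) (I : Set V) (H : Set (Sym2 V))
    (M : Sym2 V → V) : Prop where
  eq_of_mem_triangle : ∀ t : Finset V, G.IsNClique 3 t → ∀ x ∈ I, ∀ y ∈ I, x ∈ t → y ∈ t → x = y
  mem_iff : ∀ e, e ∈ H ↔ e ∈ G.edgeSet ∧ ∃ x ∈ I, ∀ w ∈ e, G.Adj x w
  injOn : Set.InjOn M H
  map_mem : ∀ e ∈ H, M e ∈ I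
  map_adj : ∀ e ∈ H, ∀ w ∈ e, G.Adj (M e) w

/-- The edges of `H` with no endpoint in `F`. -/
def uncoveredEdges (F : Set V) (H : Set (Sym2 V)) : Set (Sym2 V) :=
  {e ∈ H | ∀ w ∈ e, w ∉ F}

/-- The hitting set obtained from `F` by trading its vertices in `I` for one endpoint of each edge
of `H` that `F` leaves uncovered; `e.out.1` is an arbitrary choice of endpoint. -/
def crownExchange (F I : Set V) (H : Set (Sym2 V)) : Set V :=
  F \ I ∪ (fun e ↦ e.out.1) '' uncoveredEdges F H

theorem isNClique_three_insert_toFinset [DecidableEq V] {e : Sym2 V} {x : V}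
    (he : e ∈ G.edgeSet) (hx : ∀ w ∈ e, G.Adj x w) : G.IsNClique 3 (insert x e.toFinset) := by
  induction e with
  | _ a b =>
    rw [Sym2.toFinset_mk_eq, SimpleGraph.is3Clique_triple_iff]
    exact ⟨hx a (Sym2.mem_mk_left a b), hx b (Sym2.mem_mk_right a b), he⟩

theorem exists_opposite_edge {t : Finset V} (ht : G.IsNClique 3 t) {v : V} (hv : v ∈ t) :
    ∃ e ∈ G.edgeSet, ∀ w ∈ e, w ∈ t ∧ G.Adj v w := by
  classical
  obtain ⟨a, b, hab, ht_erase⟩ : ∃ a b, a ≠ b ∧ t.erase v = {a, b} := by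
    rw [← Finset.card_eq_two, Finset.card_erase_of_mem hv, ht.card_eq]
  have mem_and_adj : ∀ w ∈ t.erase v, w ∈ t ∧ G.Adj v w := fun w hw ↦
    have ⟨hwv, hwt⟩ := Finset.mem_erase.1 hw
    ⟨hwt, ht.isClique hv hwt hwv.symm⟩
  have ha := mem_and_adj a (by simp [ht_erase])
  have hb := mem_and_adj b (by simp [ht_erase])
  exact ⟨s(a, b), ht.isClique ha.1 hb.1 hab, Sym2.ball.2 ⟨ha, hb⟩⟩

namespace IsTriangleCrown

theorem notMem_of_mem_edge (hc : IsTriangleCrown G I H M) {e : Sym2 V} (he : e ∈ H) {w : V}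
    (hw : w ∈ e) : w ∉ I := by
  classical
  intro hwI
  obtain ⟨he_edge, x, hxI, hx_adj⟩ := (hc.mem_iff e).1 he
  exact (hx_adj w hw).ne <| hc.eq_of_mem_triangle _
    (isNClique_three_insert_toFinset he_edge hx_adj) x hxI w hwI
    (Finset.mem_insert_self _ _) (Finset.mem_insert_of_mem (Sym2.mem_toFinset.2 hw))

theorem mapsTo_uncoveredEdges (hc : IsTriangleCrown G I H M) (hF : IsTriangleHittingSet G F) :
    Set.MapsTo M (uncoveredEdges F H) (F ∩ I) := by
  classical
  rintro e ⟨he, he_uncovered⟩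
  obtain ⟨v, hv, hvF⟩ := hF _
    (isNClique_three_insert_toFinset ((hc.mem_iff e).1 he).1 (hc.map_adj e he))
  obtain rfl | hve := Finset.mem_insert.1 hv
  · exact ⟨hvF, hc.map_mem e he⟩
  · exact absurd hvF (he_uncovered v (Sym2.mem_toFinset.1 hve))

theorem encard_crownExchange_le (hc : IsTriangleCrown G I H M) (hF : IsTriangleHittingSet G F) :
    (crownExchange F I H).encard ≤ F.encard :=
  calc
    (crownExchange F I H).encard
    _ ≤ (F \ I).encard + ((fun e ↦ e.out.1) '' uncoveredEdges F H).encard :=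
      Set.encard_union_le _ _
    _ ≤ (F \ I).encard + (uncoveredEdges F H).encard := by
      gcongr
      exact Set.encard_image_le _ _
    _ ≤ (F \ I).encard + (F ∩ I).encard := by
      gcongr
      exact Set.encard_le_encard_of_injOn (hc.mapsTo_uncoveredEdges hF)
        (hc.injOn.mono (Set.sep_subset _ _))
    _ = F.encard := Set.encard_sdiff_add_encard_inter F I

theorem notMem_of_mem_crownExchange (hc : IsTriangleCrown G I H M) {v : V}
    (hv : v ∈ crownExchange F I H) : v ∉ I := by
  obtain ⟨-, hvI⟩ | ⟨e, ⟨he, -⟩, rfl⟩ := hv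
  · exact hvI
  · exact hc.notMem_of_mem_edge he (Sym2.out_fst_mem e)

theorem exists_mem_crownExchange (hc : IsTriangleCrown G I H M) {e : Sym2 V} (he : e ∈ H) :
    ∃ w ∈ e, w ∈ crownExchange F I H := by
  by_cases hF : ∃ w ∈ e, w ∈ F
  · obtain ⟨w, hwe, hwF⟩ := hF
    exact ⟨w, hwe, .inl ⟨hwF, hc.notMem_of_mem_edge he hwe⟩⟩
  · push Not at hF
    exact ⟨e.out.1, Sym2.out_fst_mem e, .inr ⟨e, ⟨he, hF⟩, rfl⟩⟩

theorem isTriangleHittingSet_of_sdiff_subset (hc : IsTriangleCrown G I H M)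
    (hF : IsTriangleHittingSet G F) (hFF' : F \ I ⊆ F') (hF'H : ∀ e ∈ H, ∃ w ∈ e, w ∈ F') :
    IsTriangleHittingSet G F' := by
  intro t ht
  obtain ⟨v, hvt, hvF⟩ := hF t ht
  by_cases hvI : v ∈ I
  · obtain ⟨e, he_edge, he⟩ := exists_opposite_edge ht hvt
    have heH : e ∈ H := (hc.mem_iff e).2 ⟨he_edge, v, hvI, fun w hw ↦ (he w hw).2⟩
    obtain ⟨w, hwe, hwF'⟩ := hF'H e heH
    exact ⟨w, (he w hwe).1, hwF'⟩
  · exact ⟨v, hvt, hFF' ⟨hvF, hvI⟩⟩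

end IsTriangleCrown

theorem crown_reduction_general (hc : IsTriangleCrown G I H M) {k : ℕ}
    (hhit : ∃ F : Finset V, F.card ≤ k ∧ IsTriangleHittingSet G F) :
    ∃ F' : Finset V, F'.card ≤ k ∧ IsTriangleHittingSet G F' ∧
      (∀ v ∈ F', v ∉ I) ∧ ∀ e ∈ H, ∃ w ∈ e, w ∈ F' := by
  obtain ⟨F, hFk, hF⟩ := hhit
  have hcard : (crownExchange ↑F I H).encard ≤ k :=
    (hc.encard_crownExchange_le hF).trans (by simpa using hFk)
  have hcover : ∀ e ∈ H, ∃ w ∈ e, w ∈ crownExchange ↑F I H :=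
    fun _ he ↦ hc.exists_mem_crownExchange he
  have hdisj : ∀ v ∈ crownExchange ↑F I H, v ∉ I := fun _ ↦ hc.notMem_of_mem_crownExchange
  have hhits : IsTriangleHittingSet G (crownExchange ↑F I H) :=
    hc.isTriangleHittingSet_of_sdiff_subset hF Set.subset_union_left hcover
  obtain ⟨F', hF'⟩ := (Set.finite_of_encard_le_coe hcard).exists_finset_coe
  rw [← hF'] at hcard hcover hdisj hhits
  exact ⟨F', by simpa using hcard, hhits, hdisj, hcover⟩

end TriangleCrown

/-- If `(I, H, M)` is a crown for the triangles of `G` and `G` has a triangle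
hitting set of size at most `k`, then `G` has a triangle hitting set `F'` of size at most `k`
that is disjoint from `I` and contains an endpoint of every edge of `H`. -/
theorem crown_reduction {V : Type*} [Fintype V] [DecidableEq V] (G : SimpleGraph V)
    (k : ℕ) (I : Finset V) (H : Finset (Sym2 V)) (M : Sym2 V → V)
    (hI : ∀ t : Finset V, G.IsNClique 3 t → ∀ x ∈ I, ∀ y ∈ I, x ∈ t → y ∈ t → x = y)
    (hH : ∀ e : Sym2 V, e ∈ H ↔ e ∈ G.edgeSet ∧ ∃ x ∈ I, ∀ w ∈ e, G.Adj x w)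
    (hMinj : Set.InjOn M ↑H)
    (hMI : ∀ e ∈ H, M e ∈ I)
    (hMadj : ∀ e ∈ H, ∀ w ∈ e, G.Adj (M e) w)
    (hhit : ∃ F : Finset V, F.card ≤ k ∧
      ∀ t : Finset V, G.IsNClique 3 t → ∃ v ∈ t, v ∈ F) :
    ∃ F' : Finset V, F'.card ≤ k ∧
      (∀ t : Finset V, G.IsNClique 3 t → ∃ v ∈ t, v ∈ F') ∧
      (∀ v ∈ F', v ∉ I) ∧
      (∀ e ∈ H, ∃ w ∈ e, w ∈ F') := by
  have hc : IsTriangleCrown G I H M := ⟨hI, hH, hMinj, hMI, hMadj⟩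
  exact crown_reduction_general hc hhit
end

section
/- Let G be a finite simple graph, let I be a set of vertices of G such that no triangle of G contains two distinct vertices of I and every vertex of I lies in some triangle of G, and let H be the set of all edges of G that form a triangle together with some vertex of I. If |I| > |H|, then there exist a nonempty subset I' of I, a subset H' of H, and an injective map M' from H' to I' such that: for every edge uv in H', the vertex M'(uv) forms a triangle with u and v; and every edge of G that forms a triangle together with some vertex of I' belongs to H'. (In particular, (I', H', M') is a crown for the triangles of G.) -/
/-!
Among the subsets `X` of `I`, take one maximizing `|X| - |N(X)|`, where `N(X)` is the set of edges
forming a triangle with a vertex of `X`. The maximum is positive because `|I| > |H|`, so `X` is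
nonempty. If `S ⊆ N(X)`, then removing from `X` all vertices forming a triangle with an edge of `S`
removes at least `S` from `N(X)`; since this does not increase `|X| - |N(X)|`, at least `|S|`
vertices were removed. That is Hall's condition for matching `N(X)` into `X`.
-/

section Deficiency

variable {α β : Type*} [DecidableEq β]

lemma exists_injOn_forall_mem_of_card_le_card_biUnion [Nonempty β] {s : Finset α}
    {t : α → Finset β} (h : ∀ u ⊆ s, u.card ≤ (u.biUnion t).card) :
    ∃ f : α → β, Set.InjOn f s ∧ ∀ a ∈ s, f a ∈ t a := by
  classical
  have hall (u : Finset s) : u.card ≤ (u.biUnion fun a => t a).card := by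
    simpa [Finset.map_eq_image, Finset.image_biUnion,
      Finset.card_image_of_injective _ Subtype.val_injective] using
      h (u.map (Function.Embedding.subtype _)) (Finset.map_subtype_subset u)
  obtain ⟨g, g_inj, hg⟩ :=
    (Finset.all_card_le_biUnion_card_iff_exists_injective fun a : s => t a).mp hall
  obtain ⟨f, rfl⟩ := Subtype.val_injective.surjective_comp_right (γ := β) g
  exact ⟨f, Set.injOn_iff_injective.mpr g_inj, fun a ha => hg ⟨a, ha⟩⟩

/-- The deficiency `|X| - |N(X)|` of a set `X` of indices, where `N(X)` is the union of the sets
`N x` with `x ∈ X`. Hall's condition for `N` says that it is never positive. It is an integer so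
that it can be negative. -/
def deficiency (N : α → Finset β) (X : Finset α) : ℤ :=
  X.card - (X.biUnion N).card

lemma deficiency_pos_iff {N : α → Finset β} {X : Finset α} :
    0 < deficiency N X ↔ (X.biUnion N).card < X.card := by
  simp [deficiency]

lemma card_le_card_biUnion_of_deficiency_maximal [DecidableEq α] {N : α → Finset β} {X : Finset α}
    (hX : ∀ Y ⊆ X, deficiency N Y ≤ deficiency N X) {S : Finset β} (hS : S ⊆ X.biUnion N) :
    S.card ≤ (S.biUnion fun b => {x ∈ X | b ∈ N x}).card := by
  set T := S.biUnion fun b => {x ∈ X | b ∈ N x}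
  have hT : T ⊆ X := Finset.biUnion_subset.mpr fun _ _ => Finset.filter_subset _ _
  have removed : (X \ T).biUnion N ⊆ X.biUnion N \ S := by
    intro b hb
    obtain ⟨x, hx, hbx⟩ := Finset.mem_biUnion.mp hb
    obtain ⟨hxX, hxT⟩ := Finset.mem_sdiff.mp hx
    refine Finset.mem_sdiff.mpr ⟨Finset.mem_biUnion.mpr ⟨x, hxX, hbx⟩, fun hbS => hxT ?_⟩
    exact Finset.mem_biUnion.mpr ⟨b, hbS, Finset.mem_filter.mpr ⟨hxX, hbx⟩⟩
  have card_removed := Finset.card_le_card removed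
  have card_S := Finset.card_sdiff_add_card_eq_card hS
  have card_T := Finset.card_sdiff_add_card_eq_card hT
  have deficiency_le := hX (X \ T) Finset.sdiff_subset
  simp only [deficiency] at deficiency_le
  lia

lemma exists_injOn_biUnion_of_deficiency_maximal {N : α → Finset β} {X : Finset α}
    (hX : ∀ Y ⊆ X, deficiency N Y ≤ deficiency N X) (hne : X.Nonempty) :
    ∃ f : β → α, Set.InjOn f (X.biUnion N) ∧ ∀ b ∈ X.biUnion N, f b ∈ X ∧ b ∈ N (f b) := by
  classical
  have : Nonempty α := hne.nonempty
  obtain ⟨f, f_inj, hf⟩ := exists_injOn_forall_mem_of_card_le_card_biUnion fun _ hS =>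
    card_le_card_biUnion_of_deficiency_maximal hX hS
  exact ⟨f, f_inj, fun b hb => Finset.mem_filter.mp (hf b hb)⟩

lemma exists_nonempty_subset_injOn_biUnion {N : α → Finset β} {A : Finset α}
    (hA : (A.biUnion N).card < A.card) :
    ∃ X ⊆ A, X.Nonempty ∧ ∃ f : β → α,
      Set.InjOn f (X.biUnion N) ∧ ∀ b ∈ X.biUnion N, f b ∈ X ∧ b ∈ N (f b) := by
  obtain ⟨X, hXA, hmax⟩ := A.powerset.exists_max_image (deficiency N) ⟨A, A.mem_powerset_self⟩
  simp only [Finset.mem_powerset] at hXA hmax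
  have deficiency_pos : 0 < deficiency N X :=
    (deficiency_pos_iff.mpr hA).trans_le (hmax A subset_rfl)
  have hne : X.Nonempty :=
    Finset.card_pos.mp (Nat.zero_lt_of_lt (deficiency_pos_iff.mp deficiency_pos))
  exact ⟨X, hXA, hne,
    exists_injOn_biUnion_of_deficiency_maximal (fun Y hY => hmax Y (hY.trans hXA)) hne⟩

end Deficiency

theorem crown_existence_general {V : Type*} (G : SimpleGraph V)
    (I : Finset V) (H : Finset (Sym2 V))
    (hH : ∀ e : Sym2 V, e ∈ H ↔ e ∈ G.edgeSet ∧ ∃ x ∈ I, ∀ w ∈ e, G.Adj x w)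
    (hcard : H.card < I.card) :
    ∃ (I' : Finset V) (H' : Finset (Sym2 V)) (M' : Sym2 V → V),
      I' ⊆ I ∧ I'.Nonempty ∧ H' ⊆ H ∧
      Set.InjOn M' ↑H' ∧
      (∀ e ∈ H', M' e ∈ I') ∧
      (∀ e ∈ H', ∀ w ∈ e, G.Adj (M' e) w) ∧
      (∀ e ∈ G.edgeSet, (∃ x ∈ I', ∀ w ∈ e, G.Adj x w) → e ∈ H') := by
  classical
  let N (x : V) : Finset (Sym2 V) := {e ∈ H | ∀ w ∈ e, G.Adj x w}
  have biUnion_subset (X : Finset V) : X.biUnion N ⊆ H :=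
    Finset.biUnion_subset.mpr fun _ _ => Finset.filter_subset _ _
  obtain ⟨I', hI', hne, M', M'_inj, hM'⟩ := exists_nonempty_subset_injOn_biUnion
    ((Finset.card_le_card (biUnion_subset I)).trans_lt hcard)
  refine ⟨I', I'.biUnion N, M', hI', hne, biUnion_subset I', M'_inj, fun e he => (hM' e he).1,
    fun e he => (Finset.mem_filter.mp (hM' e he).2).2, ?_⟩
  rintro e he ⟨x, hx, hxe⟩
  have heH : e ∈ H := (hH e).mpr ⟨he, x, hI' hx, hxe⟩
  exact Finset.mem_biUnion.mpr ⟨x, hx, Finset.mem_filter.mpr ⟨heH, hxe⟩⟩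

/-- If no triangle of `G` contains two distinct vertices of `I`, every vertex of
`I` lies in a triangle, `H` is the set of edges forming a triangle with some vertex of `I`,
and `|I| > |H|`, then there is a crown `(I', H', M')` for the triangles of `G` with
`I' ⊆ I` nonempty and `H' ⊆ H`. -/
theorem crown_existence {V : Type*} [Fintype V] [DecidableEq V] (G : SimpleGraph V)
    (I : Finset V) (H : Finset (Sym2 V))
    (hI : ∀ t : Finset V, G.IsNClique 3 t → ∀ x ∈ I, ∀ y ∈ I, x ∈ t → y ∈ t → x = y)
    (hItri : ∀ x ∈ I, ∃ t : Finset V, G.IsNClique 3 t ∧ x ∈ t)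
    (hH : ∀ e : Sym2 V, e ∈ H ↔ e ∈ G.edgeSet ∧ ∃ x ∈ I, ∀ w ∈ e, G.Adj x w)
    (hcard : H.card < I.card) :
    ∃ (I' : Finset V) (H' : Finset (Sym2 V)) (M' : Sym2 V → V),
      I' ⊆ I ∧ I'.Nonempty ∧ H' ⊆ H ∧
      Set.InjOn M' ↑H' ∧
      (∀ e ∈ H', M' e ∈ I') ∧
      (∀ e ∈ H', ∀ w ∈ e, G.Adj (M' e) w) ∧
      (∀ e ∈ G.edgeSet, (∃ x ∈ I', ∀ w ∈ e, G.Adj x w) → e ∈ H') :=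
  crown_existence_general G I H hH hcard
end

section
/- Let G be a finite simple graph and let A be a class of false twins of G, i.e., a set of pairwise non-adjacent vertices all having the same neighborhood. Let F be a minimal feedback vertex set of G, i.e., the graph induced on V(G) \ F is acyclic and no proper subset F' of F has the property that the graph induced on V(G) \ F' is acyclic. Then either F contains no vertex of A, or F contains all vertices of A except at most one (i.e., |A \ F| ≤ 1). -/
/-!
Minimality gives each vertex `a ∈ F` a cycle meeting `F` only in `a`; the two neighbours of `a` on
that cycle lie outside `F`. If `a` has two twins outside `F`, these are adjacent to both of those
neighbours and close up to a 4-cycle avoiding `F`.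
-/

open SimpleGraph

section

variable {V : Type*} {G : SimpleGraph V} {F : Set V} {a b c : V}

/-- A feedback vertex set of `G`: a set of vertices whose deletion leaves an acyclic graph. It is
encoded as a `Set`, so that minimality is `Minimal` with respect to inclusion and `V` may be
infinite. -/
def IsFeedbackVertexSet (G : SimpleGraph V) (F : Set V) : Prop :=
  (G.induce Fᶜ).IsAcyclic

theorem isFeedbackVertexSet_iff_forall_isCycle :
    IsFeedbackVertexSet G F ↔
      ∀ ⦃v : V⦄ (w : G.Walk v v), w.IsCycle → ∃ x ∈ w.support, x ∈ F := by
  constructor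
  · intro hF v w hw
    by_contra! hdisj
    refine hF (w.induce Fᶜ hdisj) (.of_map (f := (Embedding.induce Fᶜ).toHom) ?_)
    rwa [Walk.map_induce]
  · intro hF v w hw
    obtain ⟨x, hx, hxF⟩ := hF _ (hw.map (f := (Embedding.induce Fᶜ).toHom) Subtype.val_injective)
    rw [Walk.support_map, List.mem_map] at hx
    obtain ⟨y, -, rfl⟩ := hx
    exact y.2 hxF

namespace IsFeedbackVertexSet

theorem mono {F' : Set V} (hF : IsFeedbackVertexSet G F) (h : F ⊆ F') :
    IsFeedbackVertexSet G F' :=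
  IsAcyclic.embedding (G.induceHomOfLE (Set.compl_subset_compl.mpr h)) hF

theorem minimal_coe_iff {F : Finset V} :
    Minimal (IsFeedbackVertexSet G) (F : Set V) ↔
      IsFeedbackVertexSet G F ∧ ∀ F' ⊂ F, ¬ IsFeedbackVertexSet G F' := by
  classical
  refine ⟨fun hF ↦ ⟨hF.prop, fun F' h ↦ hF.not_prop_of_ssubset (Finset.coe_ssubset.mpr h)⟩,
    fun ⟨hF, hmin⟩ ↦ ?_⟩
  refine (Set.minimal_iff_forall_sdiff_singleton fun _ _ ↦ mono).mpr ⟨hF, fun a ha ↦ ?_⟩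
  rw [← Finset.coe_erase]
  exact hmin _ (Finset.erase_ssubset ha)

theorem subsingleton_commonNeighbors_sdiff (hF : IsFeedbackVertexSet G F) (hb : b ∉ F) (hc : c ∉ F)
    (hbc : b ≠ c) : (G.commonNeighbors b c \ F).Subsingleton := by
  rintro x ⟨⟨hbx, hcx⟩, hx⟩ y ⟨⟨hby, hcy⟩, hy⟩
  rw [mem_neighborSet] at hbx hcx hby hcy
  by_contra hxy
  let w : G.Walk b b := .cons hbx (.cons hcx.symm (.cons hcy (.cons hby.symm .nil)))
  have hw : w.IsCycle := by
    simp [w, Walk.cons_isCycle_iff, hbc, hbc.symm, hxy, hbx.ne, hbx.ne', hcx.ne', hby.ne', hcy.ne]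
  obtain ⟨z, hz, hzF⟩ := isFeedbackVertexSet_iff_forall_isCycle.mp hF w hw
  have hz' : z = b ∨ z = x ∨ z = c ∨ z = y := by
    simpa [w, or_comm, or_left_comm] using hz
  rcases hz' with rfl | rfl | rfl | rfl <;> contradiction

theorem exists_isCycle_of_minimal_of_mem (hF : Minimal (IsFeedbackVertexSet G) F) (ha : a ∈ F) :
    ∃ w : G.Walk a a, w.IsCycle ∧ ∀ x ∈ w.support, x ∈ F → x = a := by
  classical
  have hdel : ¬ IsFeedbackVertexSet G (F \ {a}) :=
    hF.not_prop_of_ssubset (Set.sdiff_singleton_ssubset.mpr ha)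
  simp only [isFeedbackVertexSet_iff_forall_isCycle, not_forall, not_exists, not_and] at hdel
  obtain ⟨v, w, hw, hwF⟩ := hdel
  have honly : ∀ x ∈ w.support, x ∈ F → x = a := fun x hx hxF ↦
    by_contra fun hxa ↦ hwF x hx ⟨hxF, hxa⟩
  obtain ⟨x, hx, hxF⟩ := isFeedbackVertexSet_iff_forall_isCycle.mp hF.prop w hw
  obtain rfl := honly x hx hxF
  exact ⟨w.rotate x hx, hw.rotate hx, fun y hy ↦ honly y ((w.mem_support_rotate_iff x hx).mp hy)⟩

theorem nontrivial_neighborSet_sdiff_of_minimal_of_mem (hF : Minimal (IsFeedbackVertexSet G) F)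
    (ha : a ∈ F) : (G.neighborSet a \ F).Nontrivial := by
  obtain ⟨w, hw, hwF⟩ := exists_isCycle_of_minimal_of_mem hF ha
  have hsnd : G.Adj a w.snd := w.adj_snd hw.not_nil
  have hpen : G.Adj a w.penultimate := (w.adj_penultimate hw.not_nil).symm
  exact ⟨w.snd, ⟨hsnd, fun h ↦ hsnd.ne' (hwF _ (w.getVert_mem_support _) h)⟩,
    w.penultimate, ⟨hpen, fun h ↦ hpen.ne' (hwF _ (w.getVert_mem_support _) h)⟩,
    hw.snd_ne_penultimate⟩

end IsFeedbackVertexSet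

end

theorem minimal_fvs_false_twins_general {V : Type*} (G : SimpleGraph V) (A F : Set V)
    (hA : ∀ a ∈ A, ∀ b ∈ A, G.neighborSet a = G.neighborSet b)
    (hF : Minimal (IsFeedbackVertexSet G) F) :
    Disjoint A F ∨ (A \ F).Subsingleton := by
  refine or_iff_not_imp_left.mpr fun hAF b ⟨hbA, hbF⟩ c ⟨hcA, hcF⟩ ↦ ?_
  obtain ⟨a, haA, haF⟩ := Set.not_disjoint_iff.mp hAF
  by_contra hbc
  have hcommon : G.commonNeighbors b c = G.neighborSet a := by
    rw [commonNeighbors_eq, hA b hbA a haA, hA c hcA a haA, Set.inter_self]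
  have hsub := hF.prop.subsingleton_commonNeighbors_sdiff hbF hcF hbc
  rw [hcommon] at hsub
  exact Set.not_subsingleton_iff.mpr
    (IsFeedbackVertexSet.nontrivial_neighborSet_sdiff_of_minimal_of_mem hF haF) hsub

/-- A minimal feedback vertex set `F` either contains no vertex of a false-twin
class `A`, or it contains all vertices of `A` except at most one. -/
theorem minimal_fvs_false_twins {V : Type*} [Fintype V] [DecidableEq V] (G : SimpleGraph V)
    (A F : Finset V)
    (hA1 : ∀ a ∈ A, ∀ b ∈ A, a ≠ b → ¬ G.Adj a b)
    (hA2 : ∀ a ∈ A, ∀ b ∈ A, G.neighborSet a = G.neighborSet b)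
    (hF : (G.induce {v | v ∉ F}).IsAcyclic)
    (hmin : ∀ F' : Finset V, F' ⊂ F → ¬ (G.induce {v | v ∉ F'}).IsAcyclic) :
    (∀ a ∈ A, a ∉ F) ∨ (A \ F).card ≤ 1 := by
  rw [← Finset.disjoint_left, Finset.card_le_one_iff_subsingleton, Finset.coe_sdiff,
    ← Finset.disjoint_coe]
  exact minimal_fvs_false_twins_general G A F hA2
    (IsFeedbackVertexSet.minimal_coe_iff.mpr ⟨hF, hmin⟩)
end

section
/- Let G be a finite simple graph and let A be a class of false twins of G, i.e., a set of pairwise non-adjacent vertices all having the same neighborhood. Let F be a minimal odd cycle transversal of G, i.e., the graph induced on V(G) \ F is bipartite (2-colorable) and no proper subset F' of F has the property that the graph induced on V(G) \ F' is bipartite. Then either F contains no vertex of A, or F contains all vertices of A except at most two (i.e., |A \ F| ≤ 2). -/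
/-!
If `N(a) ⊆ N(b)`, then sending `a` to `b` and fixing every other vertex is an endomorphism of the
graph. Hence, whenever `b` lies outside the transversal `F`, the vertex `a` can be returned to the
graph and coloured like `b`. A minimal `F` therefore cannot contain one of two false twins and
avoid the other.
-/

/-- The endomorphism of `G` that folds the vertex `a` onto `b` and fixes all other vertices; it
transports a colouring of a graph without `a` to one with `a`. -/
def foldHom {V : Type*} [DecidableEq V] {G : SimpleGraph V} {a b : V}
    (hab : G.neighborSet a ⊆ G.neighborSet b) : G →g G where
  toFun := Function.update id a b
  map_rel' {u v} huv := by
    rcases eq_or_ne u a with rfl | hu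
    · simpa [huv.ne'] using hab huv
    rcases eq_or_ne v a with rfl | hv
    · simpa [hu] using (hab huv.symm).symm
    · simpa [hu, hv] using huv

lemma mapsTo_foldHom_insert {V : Type*} [DecidableEq V] {G : SimpleGraph V} {a b : V} {S : Set V}
    (hab : G.neighborSet a ⊆ G.neighborSet b) (hb : b ∈ S) :
    Set.MapsTo (foldHom hab) (insert a S) S := by
  intro v hv
  change Function.update id a b v ∈ S
  rcases eq_or_ne v a with rfl | hva
  · simpa using hb
  · simpa [hva] using hv

lemma minimal_coe_finset_iff_forall_ssubset {α : Type*} {P : Set α → Prop} {s : Finset α} :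
    Minimal P s ↔ P s ∧ ∀ t : Finset α, t ⊂ s → ¬ P t := by
  rw [Set.minimal_iff_forall_ssubset]
  refine and_congr_right fun _ ↦ ⟨fun h t ht ↦ h (mod_cast ht), fun h t ht ↦ ?_⟩
  lift t to Finset α using s.finite_toSet.subset ht.subset
  exact h t (mod_cast ht)

lemma not_neighborSet_subset_of_minimal {V W : Type*} {G : SimpleGraph V} {H : SimpleGraph W}
    {F : Set V} {a b : V} (hF : Minimal (fun S : Set V ↦ Nonempty (G.induce Sᶜ →g H)) F)
    (ha : a ∈ F) (hb : b ∉ F) : ¬ G.neighborSet a ⊆ G.neighborSet b := by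
  classical
  intro hab
  have hfold : Set.MapsTo (foldHom hab) (F \ {a})ᶜ Fᶜ := by
    rw [Set.compl_sdiff, ← Set.insert_eq]
    exact mapsTo_foldHom_insert hab hb
  obtain ⟨c⟩ := hF.prop
  exact hF.not_prop_of_ssubset (Set.sdiff_singleton_ssubset.mpr ha)
    ⟨c.comp (SimpleGraph.induceHom (foldHom hab) hfold)⟩

/-- Odd cycle transversals are the case where `H` is the complete graph on two vertices. -/
theorem minimal_oct_false_twins_general {V W : Type*} {G : SimpleGraph V} {H : SimpleGraph W}
    {A F : Set V} (hA : ∀ a ∈ A, ∀ b ∈ A, G.neighborSet a = G.neighborSet b)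
    (hF : Minimal (fun S : Set V ↦ Nonempty (G.induce Sᶜ →g H)) F) :
    Disjoint A F ∨ A ⊆ F := by
  by_contra! ⟨hdisj, hsub⟩
  obtain ⟨a, haA, haF⟩ := Set.not_disjoint_iff.mp hdisj
  obtain ⟨b, hbA, hbF⟩ := Set.not_subset.mp hsub
  exact not_neighborSet_subset_of_minimal hF haF hbF (hA a haA b hbA).subset

/-- A minimal odd cycle transversal `F` either contains no vertex of a false-twin
class `A`, or it contains all vertices of `A` except at most two. -/
theorem minimal_oct_false_twins {V : Type*} [Fintype V] [DecidableEq V] (G : SimpleGraph V)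
    (A F : Finset V)
    (hA1 : ∀ a ∈ A, ∀ b ∈ A, a ≠ b → ¬ G.Adj a b)
    (hA2 : ∀ a ∈ A, ∀ b ∈ A, G.neighborSet a = G.neighborSet b)
    (hF : (G.induce {v | v ∉ F}).Colorable 2)
    (hmin : ∀ F' : Finset V, F' ⊂ F → ¬ (G.induce {v | v ∉ F'}).Colorable 2) :
    (∀ a ∈ A, a ∉ F) ∨ (A \ F).card ≤ 2 :=
  (minimal_oct_false_twins_general hA2 (minimal_coe_finset_iff_forall_ssubset.mpr ⟨hF, hmin⟩)).imp
    (fun h _ ha ↦ Set.disjoint_left.mp h ha)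
    fun h ↦ by simp [Finset.sdiff_eq_empty_iff_subset.mpr h]
end

section
/- Let G be a finite simple graph, let p be a natural number, and let F₀ be a set of vertices of G such that: (i) every triangle of G contains a vertex of F₀ (F₀ is a triangle hitting set), and (ii) for every vertex v of F₀, every set of pairwise vertex-disjoint edges of the subgraph of G induced by N(v) \ F₀ has size at most p. Then G has a core W with |W| ≤ |E(G[F₀])| + p·|F₀|, where E(G[F₀]) is the set of edges of G with both endpoints in F₀; that is, there is a set W of at most |E(G[F₀])| + p·|F₀| triangles of G such that every triangle of G shares at least two vertices with some triangle of W. -/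
/-!
A triangle meeting `F₀` twice contains an edge of `G[F₀]`, and one triangle through each such edge
takes care of all of these. A triangle meeting `F₀` in a single vertex `v` is `v` joined to an edge
of `G[N(v) \ F₀]`. A maximum matching of that graph has at most `p` edges and meets all of its
edges, so some triangle joining `v` to a matching edge shares `v` and a second vertex with the given
triangle.
-/

section

open Finset

theorem exists_pairwise_forall_exists_not {α : Type*} {r : α → α → Prop} [Std.Symm r] [Std.Irrefl r]
    {E : Set α} {n : ℕ} (hE : ∀ M : Finset α, ↑M ⊆ E → (M : Set α).Pairwise r → #M ≤ n) :
    ∃ M : Finset α, ↑M ⊆ E ∧ (M : Set α).Pairwise r ∧ ∀ e ∈ E, ∃ f ∈ M, ¬ r e f := by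
  classical
  let packings : Set (Finset α) := {M | ↑M ⊆ E ∧ (M : Set α).Pairwise r}
  have bounded : (card '' packings).Finite :=
    (Set.finite_Iic n).subset (Set.image_subset_iff.2 fun M hM => hE M hM.1 hM.2)
  obtain ⟨M, ⟨hME, hMr⟩, hmax⟩ :=
    Set.Finite.exists_maximalFor' card packings bounded ⟨∅, by simp [packings]⟩
  refine ⟨M, hME, hMr, fun e he => ?_⟩
  by_contra! hr
  have heM : e ∉ M := fun h => Std.Irrefl.irrefl e (hr e h)
  have insert_mem : insert e M ∈ packings := by
    refine ⟨by simpa [Set.insert_subset_iff] using ⟨he, hME⟩, ?_⟩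
    rw [coe_insert]
    exact hMr.insert fun f hf _ => ⟨hr f hf, Std.Symm.symm _ _ (hr f hf)⟩
  have := hmax insert_mem (card_le_card (subset_insert e M))
  rw [card_insert_of_notMem heM] at this
  omega

variable {V : Type*}

/-- The edges of a matching are pairwise related by this relation: they have no common endpoint. -/
def VertexDisjoint (e f : Sym2 V) : Prop := ∀ w ∈ e, w ∉ f

instance VertexDisjoint.symm : Std.Symm (VertexDisjoint (V := V)) :=
  ⟨fun _ _ h w hf he => h w he hf⟩

instance VertexDisjoint.irrefl : Std.Irrefl (VertexDisjoint (V := V)) :=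
  ⟨fun e h => h e.out.1 e.out_fst_mem e.out_fst_mem⟩

/-- The edge set of the induced subgraph `G[S]`, as a set of pairs of vertices of `G`. -/
def inducedEdgeSet (G : SimpleGraph V) (S : Set V) : Set (Sym2 V) :=
  {e | e ∈ G.edgeSet ∧ ∀ w ∈ e, w ∈ S}

theorem mk_mem_inducedEdgeSet {G : SimpleGraph V} {S : Set V} {a b : V} :
    s(a, b) ∈ inducedEdgeSet G S ↔ G.Adj a b ∧ a ∈ S ∧ b ∈ S := by
  simp [inducedEdgeSet]

theorem finite_inducedEdgeSet (G : SimpleGraph V) (F : Finset V) :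
    (inducedEdgeSet G F).Finite :=
  F.sym2.finite_toSet.subset fun _ he => mem_sym2_iff.2 he.2

variable [DecidableEq V] {G : SimpleGraph V}

/-- The triangles in `𝒯` have a core of size at most `n`: some `n` or fewer triangles of `G` such
that each member of `𝒯` shares at least two vertices with one of them. A core of `G` is the case
`𝒯 = G.cliqueSet 3`; other families are allowed so that cores can be glued. -/
def HasTriangleCore (G : SimpleGraph V) (𝒯 : Set (Finset V)) (n : ℕ) : Prop :=
  ∃ W : Finset (Finset V),
    (∀ t ∈ W, G.IsNClique 3 t) ∧ #W ≤ n ∧ ∀ t ∈ 𝒯, ∃ s ∈ W, 2 ≤ #(t ∩ s)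

namespace HasTriangleCore

theorem mono {𝒮 𝒯 : Set (Finset V)} {m n : ℕ} (h : HasTriangleCore G 𝒯 m) (h𝒮 : 𝒮 ⊆ 𝒯)
    (hmn : m ≤ n) : HasTriangleCore G 𝒮 n :=
  let ⟨W, hW, hcard, hcover⟩ := h
  ⟨W, hW, hcard.trans hmn, fun t ht => hcover t (h𝒮 ht)⟩

theorem empty : HasTriangleCore G ∅ 0 :=
  ⟨∅, by simp⟩

theorem of_isNClique {s : Finset V} (hs : G.IsNClique 3 s) :
    HasTriangleCore G {t | 2 ≤ #(t ∩ s)} 1 :=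
  ⟨{s}, by simpa using hs, by simp, fun _ ht => ⟨s, mem_singleton_self s, ht⟩⟩

theorem union {𝒮 𝒯 : Set (Finset V)} {m n : ℕ} (h𝒮 : HasTriangleCore G 𝒮 m)
    (h𝒯 : HasTriangleCore G 𝒯 n) : HasTriangleCore G (𝒮 ∪ 𝒯) (m + n) := by
  obtain ⟨U, hU, hUcard, hUcover⟩ := h𝒮
  obtain ⟨W, hW, hWcard, hWcover⟩ := h𝒯
  refine ⟨U ∪ W, fun t ht => (mem_union.1 ht).elim (hU t) (hW t),
    (card_union_le U W).trans (add_le_add hUcard hWcard), ?_⟩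
  rintro t (ht | ht)
  · obtain ⟨s, hs, hts⟩ := hUcover t ht
    exact ⟨s, mem_union_left W hs, hts⟩
  · obtain ⟨s, hs, hts⟩ := hWcover t ht
    exact ⟨s, mem_union_right U hs, hts⟩

theorem biUnion {ι : Type*} {I : Finset ι} {𝒯 : ι → Set (Finset V)} {n : ι → ℕ}
    (h : ∀ i ∈ I, HasTriangleCore G (𝒯 i) (n i)) :
    HasTriangleCore G (⋃ i ∈ I, 𝒯 i) (∑ i ∈ I, n i) := by
  classical
  induction I using Finset.induction_on with
  | empty => simpa using empty
  | insert i I hi ih =>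
    rw [set_biUnion_insert, sum_insert hi]
    exact (h i (mem_insert_self i I)).union (ih fun j hj => h j (mem_insert_of_mem hj))

end HasTriangleCore

theorem two_le_card_inter {x y : V} {s t : Finset V} (hxy : x ≠ y) (ht : x ∈ t ∧ y ∈ t)
    (hs : x ∈ s ∧ y ∈ s) : 2 ≤ #(t ∩ s) :=
  one_lt_card.2 ⟨x, mem_inter.2 ⟨ht.1, hs.1⟩, y, mem_inter.2 ⟨ht.2, hs.2⟩, hxy⟩

theorem hasTriangleCore_containing_pair (G : SimpleGraph V) {e : Sym2 V} (he : ¬ e.IsDiag) :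
    HasTriangleCore G {t | G.IsNClique 3 t ∧ ∀ w ∈ e, w ∈ t} 1 := by
  obtain hnone | ⟨s, hs, hes⟩ := Set.eq_empty_or_nonempty {t | G.IsNClique 3 t ∧ ∀ w ∈ e, w ∈ t}
  · exact HasTriangleCore.empty.mono hnone.le zero_le_one
  · refine (HasTriangleCore.of_isNClique hs).mono (fun t ⟨_, het⟩ => ?_) le_rfl
    induction e with | _ x y
    exact two_le_card_inter he (Sym2.ball.1 het) (Sym2.ball.1 hes)

theorem hasTriangleCore_meeting_twice (G : SimpleGraph V) (F : Finset V) :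
    HasTriangleCore G {t | G.IsNClique 3 t ∧ ∃ u ∈ t, ∃ v ∈ t, u ≠ v ∧ u ∈ F ∧ v ∈ F}
      (inducedEdgeSet G F).ncard := by
  have hfin := finite_inducedEdgeSet G F
  have core := HasTriangleCore.biUnion (I := hfin.toFinset) fun e he =>
    hasTriangleCore_containing_pair G (G.not_isDiag_of_mem_edgeSet (hfin.mem_toFinset.1 he).1)
  refine core.mono ?_ (by simp [Set.ncard_eq_toFinset_card _ hfin])
  rintro t ⟨ht, u, hut, v, hvt, huv, huF, hvF⟩
  have huv_mem : s(u, v) ∈ inducedEdgeSet G F :=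
    mk_mem_inducedEdgeSet.2 ⟨ht.1 hut hvt huv, huF, hvF⟩
  exact Set.mem_biUnion (hfin.mem_toFinset.2 huv_mem) ⟨ht, Sym2.ball.2 ⟨hut, hvt⟩⟩

theorem isNClique_insert_toFinset {v : V} {e : Sym2 V}
    (he : e ∈ inducedEdgeSet G (G.neighborSet v)) : G.IsNClique 3 (insert v e.toFinset) := by
  induction e with | _ a b
  obtain ⟨hab, hva, hvb⟩ := mk_mem_inducedEdgeSet.1 he
  rw [Sym2.toFinset_mk_eq, SimpleGraph.is3Clique_triple_iff]
  exact ⟨hva, hvb, hab⟩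

theorem exists_eq_insert_toFinset {v : V} {t : Finset V} (ht : G.IsNClique 3 t) (hv : v ∈ t) :
    ∃ e ∈ inducedEdgeSet G (G.neighborSet v), t = insert v e.toFinset := by
  obtain ⟨a, b, _, hte⟩ := card_eq_two.1 (by rw [card_erase_of_mem hv, ht.card_eq])
  obtain rfl : t = {v, a, b} := by rw [← insert_erase hv, hte]
  obtain ⟨hva, hvb, hab⟩ := SimpleGraph.is3Clique_triple_iff.1 ht
  exact ⟨s(a, b), mk_mem_inducedEdgeSet.2 ⟨hab, hva, hvb⟩, by rw [Sym2.toFinset_mk_eq]⟩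

theorem hasTriangleCore_through_vertex {v : V} {A : Set V} {n : ℕ}
    (hn : ∀ M : Finset (Sym2 V), ↑M ⊆ inducedEdgeSet G (G.neighborSet v ∩ A) →
      (M : Set (Sym2 V)).Pairwise VertexDisjoint → #M ≤ n) :
    HasTriangleCore G {t | G.IsNClique 3 t ∧ v ∈ t ∧ ∀ w ∈ t, w ≠ v → w ∈ A} n := by
  obtain ⟨M, hM, hMdisj, hMmeets⟩ := exists_pairwise_forall_exists_not hn
  have core := HasTriangleCore.biUnion (I := M) fun e he => HasTriangleCore.of_isNClique
    (isNClique_insert_toFinset ⟨(hM he).1, fun w hw => ((hM he).2 w hw).1⟩)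
  refine core.mono ?_ (by simpa using hn M hM hMdisj)
  rintro t ⟨ht, hvt, htA⟩
  obtain ⟨e, he, rfl⟩ := exists_eq_insert_toFinset ht hvt
  have he_mem_A : ∀ w ∈ e, w ∈ A := fun w hw => htA w (by simp [hw]) (he.2 w hw).ne'
  obtain ⟨f, hf, hef⟩ := hMmeets e ⟨he.1, fun w hw => ⟨he.2 w hw, he_mem_A w hw⟩⟩
  obtain ⟨w, hwe, hwf⟩ : ∃ w ∈ e, w ∈ f := by simpa [VertexDisjoint] using hef
  exact Set.mem_biUnion hf
    (two_le_card_inter (he.2 w hwe).ne (by simp [hwe]) (by simp [hwf]))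

theorem core_construction_general (G : SimpleGraph V) (F₀ : Finset V) (p : V → ℕ)
    (hhit : ∀ t : Finset V, G.IsNClique 3 t → ∃ v ∈ t, v ∈ F₀)
    (hmatch : ∀ v ∈ F₀, ∀ M : Finset (Sym2 V), ↑M ⊆ inducedEdgeSet G (G.neighborSet v \ F₀) →
      (M : Set (Sym2 V)).Pairwise VertexDisjoint → #M ≤ p v) :
    HasTriangleCore G (G.cliqueSet 3) ((inducedEdgeSet G F₀).ncard + ∑ v ∈ F₀, p v) := by
  have core := (hasTriangleCore_meeting_twice G F₀).union
    (HasTriangleCore.biUnion fun v hv => hasTriangleCore_through_vertex (hmatch v hv))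
  refine core.mono (fun t ht => ?_) le_rfl
  obtain ⟨v, hvt, hv⟩ := hhit t ht
  by_cases hu : ∃ u ∈ t, u ≠ v ∧ u ∈ F₀
  · obtain ⟨u, hut, huv, huF⟩ := hu
    exact Or.inl ⟨ht, u, hut, v, hvt, huv, huF, hv⟩
  · push Not at hu
    exact Or.inr (Set.mem_biUnion hv ⟨ht, hvt, hu⟩)

end

/-- If `F₀` is a triangle hitting set of `G` such that for every `v ∈ F₀` every
matching of the subgraph of `G` induced by `N(v) \ F₀` has size at most `p`, then `G` has a
core `W` of size at most `|E(G[F₀])| + p·|F₀|`. -/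
theorem core_construction {V : Type*} [Fintype V] [DecidableEq V] (G : SimpleGraph V)
    (p : ℕ) (F₀ : Finset V)
    (hhit : ∀ t : Finset V, G.IsNClique 3 t → ∃ v ∈ t, v ∈ F₀)
    (hmatch : ∀ v ∈ F₀, ∀ M : Finset (Sym2 V),
      (∀ e ∈ M, e ∈ G.edgeSet ∧ ∀ w ∈ e, G.Adj v w ∧ w ∉ F₀) →
      (∀ e ∈ M, ∀ f ∈ M, e ≠ f → ∀ w ∈ e, w ∉ f) →
      M.card ≤ p) :
    ∃ W : Finset (Finset V),
      (∀ t ∈ W, G.IsNClique 3 t) ∧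
      W.card ≤ {e : Sym2 V | e ∈ G.edgeSet ∧ ∀ w ∈ e, w ∈ F₀}.ncard + p * F₀.card ∧
      (∀ t : Finset V, G.IsNClique 3 t → ∃ s ∈ W, 2 ≤ (t ∩ s).card) := by
  have core := core_construction_general G F₀ (fun _ => p) hhit fun v hv M hM hdisj =>
    hmatch v hv M hM fun e he f hf => hdisj he hf
  rwa [Finset.sum_const, smul_eq_mul, mul_comm] at core
end

section
/- Let G be a finite simple graph and let W be a core of G, i.e., a set of triangles of G such that every triangle of G shares at least two vertices with some triangle of W. Let I be the set of vertices of G that are contained in some triangle of G but in no triangle of W, and let H be the set of edges of G that form a triangle together with some vertex of I. Then every edge of H has both of its endpoints contained in a common triangle of W, and consequently |H| ≤ 3·|W|. -/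
/-!
If `x` lies in no member of the core, then the clique `insert x t` can only meet a member `s` of
the core inside `t`; since they share `#t` vertices, `t ⊆ s`. So the cliques which extend by such
an `x` are among the facets of members of the core, and a member with `n + 1` vertices has `n + 1`
facets.
-/

open Cardinal

/-- The cores of the theorem, for cliques of any size: a set `W` of `(n + 1)`-cliques of `G` such
that every `(n + 1)`-clique of `G` shares at least `n` vertices with a member of `W`. The cores
made of triangles are the case `n = 2`; indexing by `n` instead of the clique size avoids truncated
subtraction. -/
structure IsCliqueCore {V : Type*} [DecidableEq V] (G : SimpleGraph V) (n : ℕ)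
    (W : Set (Finset V)) : Prop where
  isNClique : ∀ s ∈ W, G.IsNClique (n + 1) s
  exists_le_card_inter : ∀ t, G.IsNClique (n + 1) t → ∃ s ∈ W, n ≤ (t ∩ s).card

section Counting

variable {α : Type*} {k m : ℕ} {T W : Set (Finset α)}

theorem mk_le_choose_mul_mk_of_forall_exists_subset (hT : ∀ t ∈ T, t.card = k)
    (hW : ∀ s ∈ W, s.card ≤ m) (hTW : ∀ t ∈ T, ∃ s ∈ W, t ⊆ s) :
    #T ≤ m.choose k * #W := by
  have hcover : T ⊆ ⋃ s ∈ W, (s.powersetCard k : Set (Finset α)) := fun t ht ↦ by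
    obtain ⟨s, hs, hts⟩ := hTW t ht
    exact Set.mem_biUnion hs (Finset.mem_powersetCard.2 ⟨hts, hT t ht⟩)
  have hcard (s : W) : #(s.1.powersetCard k) ≤ m.choose k := by
    rw [mk_coe_finset, Finset.card_powersetCard]
    exact_mod_cast Nat.choose_le_choose k (hW s s.2)
  calc
    #T ≤ #(⋃ s ∈ W, (s.powersetCard k : Set (Finset α))) := mk_le_mk_of_subset hcover
    _ ≤ #W * ⨆ s : W, #(s.1.powersetCard k) := mk_biUnion_le _ W
    _ ≤ #W * m.choose k := by gcongr; exact ciSup_le' hcard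
    _ = m.choose k * #W := mul_comm _ _

end Counting

theorem subset_of_card_le_card_insert_inter {α : Type*} [DecidableEq α] {s t : Finset α} {x : α}
    (hx : x ∉ s) (h : t.card ≤ (insert x t ∩ s).card) : t ⊆ s := by
  rw [Finset.insert_inter_of_notMem hx] at h
  exact Finset.inter_eq_left.1 (Finset.eq_of_subset_of_card_le Finset.inter_subset_left h)

section Graph

variable {V : Type*} [DecidableEq V] {G : SimpleGraph V}

namespace IsCliqueCore

variable {n : ℕ} {W : Set (Finset V)}

theorem exists_subset (hW : IsCliqueCore G n W) {t : Finset V} (ht : G.IsNClique n t) {x : V}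
    (hx : ∀ s ∈ W, x ∉ s) (hadj : ∀ v ∈ t, G.Adj x v) : ∃ s ∈ W, t ⊆ s := by
  obtain ⟨s, hs, hcard⟩ := hW.exists_le_card_inter _ (ht.insert hadj)
  exact ⟨s, hs, subset_of_card_le_card_insert_inter (hx s hs) (ht.card_eq.trans_le hcard)⟩

theorem mk_le_mul_mk (hW : IsCliqueCore G n W) {T : Set (Finset V)} (hT : ∀ t ∈ T, G.IsNClique n t)
    (hTW : ∀ t ∈ T, ∃ s ∈ W, t ⊆ s) : #T ≤ (n + 1 : ℕ) * #W := by
  simpa using mk_le_choose_mul_mk_of_forall_exists_subset (fun t ht ↦ (hT t ht).card_eq)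
    (fun s hs ↦ (hW.isNClique s hs).card_eq.le) hTW

end IsCliqueCore

theorem isNClique_toFinset_of_mem_edgeSet {e : Sym2 V} (he : e ∈ G.edgeSet) :
    G.IsNClique 2 e.toFinset := by
  refine ⟨?_, Sym2.card_toFinset_of_not_isDiag e (G.not_isDiag_of_mem_edgeSet he)⟩
  induction e with
  | _ a b => simpa [Sym2.toFinset_mk_eq, SimpleGraph.isClique_pair] using fun _ ↦ he

theorem sym2_toFinset_injective : Function.Injective (Sym2.toFinset (α := V)) := fun e f h ↦
  Sym2.ext fun v ↦ by rw [← Sym2.mem_toFinset, h, Sym2.mem_toFinset]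

theorem core_edges_bound_general {W : Set (Finset V)} {I : Set V} {H : Set (Sym2 V)}
    (hW : IsCliqueCore G 2 W) (hI : ∀ x ∈ I, ∀ s ∈ W, x ∉ s)
    (hH : ∀ e ∈ H, e ∈ G.edgeSet ∧ ∃ x ∈ I, ∀ w ∈ e, G.Adj x w) :
    (∀ e ∈ H, ∃ s ∈ W, ∀ w ∈ e, w ∈ s) ∧ #H ≤ 3 * #W := by
  have hclique : ∀ e ∈ H, G.IsNClique 2 e.toFinset := fun e he ↦
    isNClique_toFinset_of_mem_edgeSet (hH e he).1
  have hcover : ∀ e ∈ H, ∃ s ∈ W, e.toFinset ⊆ s := fun e he ↦ by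
    obtain ⟨-, x, hx, hadj⟩ := hH e he
    exact hW.exists_subset (hclique e he) (hI x hx) fun v hv ↦ hadj v (Sym2.mem_toFinset.1 hv)
  constructor
  · simpa only [Finset.subset_iff, Sym2.mem_toFinset] using hcover
  · rw [← mk_image_eq sym2_toFinset_injective]
    exact hW.mk_le_mul_mk (Set.forall_mem_image.2 hclique) (Set.forall_mem_image.2 hcover)

end Graph

/-- Let `W` be a core of `G`, `I` the set of vertices in some triangle of `G` but
in no triangle of `W`, and `H` the set of edges of `G` forming a triangle with some vertex of
`I`. Then both endpoints of every edge of `H` lie in a common triangle of `W`, and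
`|H| ≤ 3·|W|`. -/
theorem core_edges_bound {V : Type*} [Fintype V] [DecidableEq V] (G : SimpleGraph V)
    (W : Finset (Finset V)) (I : Finset V) (H : Finset (Sym2 V))
    (hW : ∀ t ∈ W, G.IsNClique 3 t)
    (hcore : ∀ t : Finset V, G.IsNClique 3 t → ∃ s ∈ W, 2 ≤ (t ∩ s).card)
    (hI : ∀ x : V, x ∈ I ↔ (∃ t : Finset V, G.IsNClique 3 t ∧ x ∈ t) ∧ ∀ s ∈ W, x ∉ s)
    (hH : ∀ e : Sym2 V, e ∈ H ↔ e ∈ G.edgeSet ∧ ∃ x ∈ I, ∀ w ∈ e, G.Adj x w) :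
    (∀ e ∈ H, ∃ s ∈ W, ∀ w ∈ e, w ∈ s) ∧ H.card ≤ 3 * W.card := by
  obtain ⟨hcover, hcard⟩ := core_edges_bound_general (W := ↑W) (I := ↑I) (H := ↑H) ⟨hW, hcore⟩
    (fun x hx ↦ ((hI x).1 hx).2) (fun e he ↦ (hH e).1 he)
  simp only [Finset.coe_sort_coe, mk_coe_finset] at hcard
  exact ⟨hcover, mod_cast hcard⟩
end

section
/- Let ι be a finite index set and, for each i ∈ ι, let Dᵢ be the closed ball in the Euclidean plane ℝ² with center cᵢ and radius rᵢ > 0. Suppose the family has ply at most p, i.e., every point of ℝ² lies in at most p of the balls Dᵢ. Then for every index i₀ ∈ ι, the number of indices i ∈ ι with rᵢ ≥ r_{i₀} and Dᵢ ∩ D_{i₀} ≠ ∅ is at most 9p. -/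
/-! Every ball that meets `D₀` and is at least as large contains a ball of the radius `r₀` of `D₀`
through a common point, and this smaller ball lies in the ball of radius `3 * r₀` concentric with
`D₀`. Shrinking does not increase the ply `p`, so the volumes of the shrunk balls add up to at most
`p` times the volume of the concentric ball, that is `3 ^ d * p` times the volume of a single one.
-/

open Metric Module MeasureTheory Set
open scoped ENNReal

/-- The ply of a family of sets: the largest number of members through a common point. It takes
values in `ℕ∞`, so that it makes sense for every family, and is `⊤` if these numbers are
unbounded. -/
noncomputable def ply {ι α : Type*} (s : ι → Set α) : ℕ∞ :=
  ⨆ x, {i | x ∈ s i}.encard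

section Ply

variable {ι κ α : Type*}

theorem encard_setOf_mem_le_ply (s : ι → Set α) (x : α) : {i | x ∈ s i}.encard ≤ ply s :=
  le_iSup (fun x ↦ {i | x ∈ s i}.encard) x

theorem ply_le_of_forall_ncard_le [Finite ι] {s : ι → Set α} {p : ℕ}
    (h : ∀ x, {i | x ∈ s i}.ncard ≤ p) : ply s ≤ p :=
  iSup_le fun x ↦ encard_le_coe_iff_finite_ncard_le.2 ⟨toFinite _, h x⟩

theorem ply_le_ply_of_injective {s : ι → Set α} {t : κ → Set α} {f : ι → κ}
    (hf : Function.Injective f) (hst : ∀ i, s i ⊆ t (f i)) : ply s ≤ ply t :=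
  iSup_mono fun _ ↦ encard_le_encard_of_injOn (fun i hi ↦ hst i hi) hf.injOn

theorem tsum_indicator_one_eq_encard (s : ι → Set α) (x : α) :
    ∑' i, (s i).indicator (1 : α → ℝ≥0∞) x = {i | x ∈ s i}.encard := by
  rw [← ENNReal.tsum_set_one, tsum_subtype {i | x ∈ s i} fun _ ↦ (1 : ℝ≥0∞)]
  rfl

theorem tsum_indicator_one_le_indicator_ply (s : ι → Set α) (x : α) :
    ∑' i, (s i).indicator (1 : α → ℝ≥0∞) x ≤ (⋃ i, s i).indicator (fun _ ↦ (ply s : ℝ≥0∞)) x := by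
  by_cases hx : x ∈ ⋃ i, s i
  · rw [indicator_of_mem hx, tsum_indicator_one_eq_encard]
    exact_mod_cast encard_setOf_mem_le_ply s x
  · have hxs (i : ι) : x ∉ s i := fun hi ↦ hx (mem_iUnion_of_mem i hi)
    simp [hxs]

theorem tsum_measure_le_ply_mul_measure_iUnion [MeasurableSpace α] {μ : Measure α}
    {s : ι → Set α} (hs : ∀ i, NullMeasurableSet (s i) μ) :
    ∑' i, μ (s i) ≤ ply s * μ (⋃ i, s i) := by
  rw [ENNReal.tsum_eq_iSup_sum]
  refine iSup_le fun T ↦ ?_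
  calc
    ∑ i ∈ T, μ (s i) = ∑ i ∈ T, ∫⁻ x, (s i).indicator 1 x ∂μ := by
      simp only [lintegral_indicator_one₀ (hs _)]
    _ = ∫⁻ x, ∑ i ∈ T, (s i).indicator 1 x ∂μ :=
      (lintegral_finsetSum' T fun i _ ↦ aemeasurable_one.indicator₀ (hs i)).symm
    _ ≤ ∫⁻ x, (⋃ i, s i).indicator (fun _ ↦ (ply s : ℝ≥0∞)) x ∂μ :=
      lintegral_mono fun x ↦
        (ENNReal.sum_le_tsum T).trans (tsum_indicator_one_le_indicator_ply s x)
    _ ≤ ply s * μ (⋃ i, s i) := lintegral_indicator_const_le _ _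

end Ply

section Shrink

theorem closedBall_subset_closedBall_two_mul_add {X : Type*} [PseudoMetricSpace X] {x y a : X}
    {r R : ℝ} (hxy : x ∈ closedBall y r) (hxa : x ∈ closedBall a R) :
    closedBall y r ⊆ closedBall a (2 * r + R) := by
  rw [mem_closedBall] at hxy hxa
  exact closedBall_subset_closedBall' (by linarith [dist_triangle_left y a x])

variable {E : Type*} [SeminormedAddCommGroup E] [NormedSpace ℝ E]

theorem exists_mem_closedBall_subset_closedBall {x b : E} {r R : ℝ} (hr : 0 ≤ r) (hrR : r ≤ R)
    (hx : x ∈ closedBall b R) : ∃ y, x ∈ closedBall y r ∧ closedBall y r ⊆ closedBall b R := by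
  obtain ⟨y, hxy, hyb⟩ : ∃ y, dist x y ≤ r ∧ dist y b ≤ R - r :=
    exists_dist_le_le hr (sub_nonneg.2 hrR) (by simpa using hx)
  exact ⟨y, hxy, closedBall_subset_closedBall' (by linarith)⟩

theorem exists_closedBall_subset_inter {a b : E} {r R : ℝ} (hrR : r ≤ R)
    (h : (closedBall b R ∩ closedBall a r).Nonempty) :
    ∃ y, closedBall y r ⊆ closedBall b R ∩ closedBall a (3 * r) := by
  obtain ⟨x, hxb, hxa⟩ := h
  obtain ⟨y, hxy, hyb⟩ :=
    exists_mem_closedBall_subset_closedBall (dist_nonneg.trans hxa) hrR hxb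
  have hya : closedBall y r ⊆ closedBall a (2 * r + r) :=
    closedBall_subset_closedBall_two_mul_add hxy hxa
  exact ⟨y, subset_inter hyb (hya.trans_eq (by ring_nf))⟩

end Shrink

section Packing

variable {ι E : Type*} [NormedAddCommGroup E] [NormedSpace ℝ E] [FiniteDimensional ℝ E]

theorem card_le_pow_finrank_mul_ply {c : ι → E} {a : E} {r : ℝ} {k : ℕ} (hr : 0 < r)
    (hc : ∀ i, closedBall (c i) r ⊆ closedBall a (k * r)) :
    ENat.card ι ≤ k ^ finrank ℝ E * ply fun i ↦ closedBall (c i) r := by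
  borelize E
  let μ : Measure E := Measure.addHaar
  set V : ℝ≥0∞ := μ (closedBall 0 r)
  have hV₀ : V ≠ 0 := (measure_closedBall_pos μ 0 hr).ne'
  have hV : V ≠ ∞ := measure_closedBall_lt_top.ne
  have volume_bound : ENat.card ι * V ≤ (k ^ finrank ℝ E * ply fun i ↦ closedBall (c i) r) * V :=
    calc
      ENat.card ι * V = ∑' i, μ (closedBall (c i) r) := by
        simp only [Measure.addHaar_closedBall_center μ (c _), ENNReal.tsum_const, V]
      _ ≤ (ply fun i ↦ closedBall (c i) r) * μ (⋃ i, closedBall (c i) r) :=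
        tsum_measure_le_ply_mul_measure_iUnion fun _ ↦ measurableSet_closedBall.nullMeasurableSet
      _ ≤ (ply fun i ↦ closedBall (c i) r) * μ (closedBall a (k * r)) := by
        gcongr
        exact iUnion_subset hc
      _ = (k ^ finrank ℝ E * ply fun i ↦ closedBall (c i) r) * V := by
        rw [Measure.addHaar_closedBall_mul μ a k.cast_nonneg hr.le,
          ENNReal.ofReal_pow k.cast_nonneg, ENNReal.ofReal_natCast]
        ring
  exact_mod_cast (ENNReal.mul_le_mul_iff_left hV₀ hV).1 volume_bound

theorem disks_larger_intersecting_bound_general (c : ι → E) (r : ι → ℝ) (i₀ : ι) (hr : 0 < r i₀) :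
    {i | r i₀ ≤ r i ∧ (closedBall (c i) (r i) ∩ closedBall (c i₀) (r i₀)).Nonempty}.encard ≤
      3 ^ finrank ℝ E * ply fun i ↦ closedBall (c i) (r i) := by
  set S := {i | r i₀ ≤ r i ∧ (closedBall (c i) (r i) ∩ closedBall (c i₀) (r i₀)).Nonempty}
  have exists_shrunk (i : S) :
      ∃ y, closedBall y (r i₀) ⊆ closedBall (c i) (r i) ∩ closedBall (c i₀) (3 * r i₀) :=
    exists_closedBall_subset_inter i.2.1 i.2.2
  choose c' hc' using exists_shrunk
  calc
    S.encard ≤ 3 ^ finrank ℝ E * ply fun i ↦ closedBall (c' i) (r i₀) :=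
      card_le_pow_finrank_mul_ply (k := 3) hr fun i ↦ (hc' i).trans inter_subset_right
    _ ≤ 3 ^ finrank ℝ E * ply fun i ↦ closedBall (c i) (r i) := by
      gcongr
      exact ply_le_ply_of_injective Subtype.val_injective fun i ↦ (hc' i).trans inter_subset_left

end Packing

/-- For a finite family of closed disks in the plane of ply at most `p`, each
disk `D_{i₀}` intersects at most `9p` disks of radius at least `r_{i₀}` (itself included). -/
theorem disks_larger_intersecting_bound {ι : Type*} [Fintype ι]
    (c : ι → EuclideanSpace ℝ (Fin 2)) (r : ι → ℝ) (hr : ∀ i, 0 < r i) (p : ℕ)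
    (hply : ∀ x : EuclideanSpace ℝ (Fin 2),
      ({i | x ∈ Metric.closedBall (c i) (r i)} : Set ι).ncard ≤ p)
    (i₀ : ι) :
    ({i | r i₀ ≤ r i ∧
        (Metric.closedBall (c i) (r i) ∩ Metric.closedBall (c i₀) (r i₀)).Nonempty} :
      Set ι).ncard ≤ 9 * p := by
  refine (encard_le_coe_iff_finite_ncard_le.1
    ((disks_larger_intersecting_bound_general c r i₀ (hr i₀)).trans ?_)).2
  simpa [show (3 : ℕ∞) ^ 2 = 9 by norm_num] using
    mul_le_mul_right (ply_le_of_forall_ncard_le hply) 9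
end

section
/- Let ι be a finite index set of size n and, for each i ∈ ι, let Dᵢ be the closed ball in the Euclidean plane ℝ² with center cᵢ and radius rᵢ > 0. Suppose every point of ℝ² lies in at most p of the balls Dᵢ. Let G be the intersection graph of the family, i.e., the simple graph on vertex set ι in which distinct i, j are adjacent if and only if Dᵢ ∩ Dⱼ ≠ ∅. Then G has at most 9·p·n edges. -/
/-!
Charge every edge to the endpoint whose ball is smaller. If `Dⱼ` meets `Dᵢ` and `rᵢ ≤ rⱼ`, then
shrinking `Dⱼ` about a common point to radius `rᵢ` gives a ball contained both in `Dⱼ` and in the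
concentric enlargement of `Dᵢ` by a factor `3`. The shrunken balls still have ply at most `p`, so
comparing volumes leaves room for at most `3 ^ d * p` of them in dimension `d`.
-/

open Metric MeasureTheory Module

/-- The family of sets `A` has ply at most `p`: every point lies in at most `p` of its members.
Counting with `Set.encard` makes a point lying in infinitely many members violate the bound. -/
def HasPlyLE {ι α : Type*} (A : ι → Set α) (p : ℕ) : Prop :=
  ∀ x, {i | x ∈ A i}.encard ≤ p

namespace HasPlyLE

variable {ι κ α : Type*} {A : ι → Set α} {p : ℕ}

theorem iff_ncard_le [Finite ι] : HasPlyLE A p ↔ ∀ x, {i | x ∈ A i}.ncard ≤ p :=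
  forall_congr' fun _ => Set.encard_le_coe_iff_finite_ncard_le.trans
    (and_iff_right (Set.toFinite _))

theorem of_subset_comp (hA : HasPlyLE A p) {B : κ → Set α} {f : κ → ι} (hf : f.Injective)
    (hBA : ∀ k, B k ⊆ A (f k)) : HasPlyLE B p := fun x =>
  (Set.encard_le_encard_of_injOn (fun k hk => hBA k hk) hf.injOn).trans (hA x)

theorem tsum_measure_le [Countable ι] [MeasurableSpace α] (hA : HasPlyLE A p) {B : Set α}
    (μ : Measure α) (hmeas : ∀ i, MeasurableSet (A i)) (hAB : ∀ i, A i ⊆ B) :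
    ∑' i, μ (A i) ≤ p * μ B := by
  have sum_indicator (x : α) : ∑' i, (A i).indicator (1 : α → ENNReal) x ≤ p :=
    calc ∑' i, (A i).indicator (1 : α → ENNReal) x
        = ∑' i, {i | x ∈ A i}.indicator (fun _ => (1 : ENNReal)) i := rfl
      _ = {i | x ∈ A i}.encard := by rw [← tsum_subtype, ENNReal.tsum_set_one]
      _ ≤ p := by exact_mod_cast hA x
  calc ∑' i, μ (A i) = ∑' i, ∫⁻ x in B, (A i).indicator 1 x ∂μ := by
        simp only [lintegral_indicator_one (hmeas _), Measure.restrict_eq_self μ (hAB _)]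
    _ = ∫⁻ x in B, ∑' i, (A i).indicator 1 x ∂μ :=
      (lintegral_tsum fun i => (measurable_one.indicator (hmeas i)).aemeasurable).symm
    _ ≤ ∫⁻ _ in B, p ∂μ := lintegral_mono sum_indicator
    _ = p * μ B := setLIntegral_const B _

end HasPlyLE

theorem exists_closedBall_subset_inter_closedBall_three_mul {E : Type*} [SeminormedAddCommGroup E]
    [NormedSpace ℝ E] {a b : E} {s t : ℝ} (hst : s ≤ t)
    (h : (closedBall a s ∩ closedBall b t).Nonempty) :
    ∃ c, closedBall c s ⊆ closedBall b t ∩ closedBall a (3 * s) := by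
  obtain ⟨x, hxa, hxb⟩ := h
  have hs : 0 ≤ s := nonneg_of_mem_closedBall hxa
  have ht : 0 ≤ t := hs.trans hst
  have ratio_nonneg : 0 ≤ s / t := by positivity
  have ratio_le_one : s / t ≤ 1 := div_le_one_of_le₀ hst ht
  have ratio_mul : s / t * t = s :=
    div_mul_cancel_of_imp fun ht0 => le_antisymm (ht0 ▸ hst) hs
  let c := AffineMap.lineMap x b (s / t)
  have dist_cb : dist c b ≤ t - s :=
    calc dist c b = (1 - s / t) * dist x b := by
          rw [dist_lineMap_right, Real.norm_of_nonneg (sub_nonneg.2 ratio_le_one)]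
      _ ≤ (1 - s / t) * t := mul_le_mul_of_nonneg_left hxb (sub_nonneg.2 ratio_le_one)
      _ = t - s := by rw [sub_mul, one_mul, ratio_mul]
  have dist_cx : dist c x ≤ s :=
    calc dist c x = s / t * dist x b := by
          rw [dist_lineMap_left, Real.norm_of_nonneg ratio_nonneg]
      _ ≤ s / t * t := mul_le_mul_of_nonneg_left hxb ratio_nonneg
      _ = s := ratio_mul
  have dist_ca : dist c a ≤ 2 * s := by
    linarith [dist_triangle c x a, mem_closedBall.1 hxa]
  exact ⟨c, Set.subset_inter (closedBall_subset_closedBall' (by linarith))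
    (closedBall_subset_closedBall' (by linarith))⟩

theorem ncard_edgeSet_le_mul_card_of_adj_imp_or {V : Type*} [Fintype V] {G : SimpleGraph V}
    {R : V → V → Prop} {k : ℕ} (hR : ∀ i j, G.Adj i j → R i j ∨ R j i)
    (hk : ∀ i, {j | R i j}.ncard ≤ k) : G.edgeSet.ncard ≤ k * Fintype.card V := by
  have edgeSet_subset : G.edgeSet ⊆ ⋃ i, (s(i, ·)) '' {j | R i j} := by
    rintro ⟨i, j⟩ hij
    rcases hR i j hij with h | h
    · exact Set.mem_iUnion.2 ⟨i, j, h, rfl⟩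
    · exact Set.mem_iUnion.2 ⟨j, i, h, Sym2.eq_swap⟩
  calc G.edgeSet.ncard ≤ (⋃ i, (s(i, ·)) '' {j | R i j}).ncard := Set.ncard_le_ncard edgeSet_subset
    _ ≤ ∑ i, ((s(i, ·)) '' {j | R i j}).ncard := Set.ncard_iUnion_le_of_fintype _
    _ ≤ ∑ _i : V, k :=
      Finset.sum_le_sum fun i _ => (Set.ncard_image_le (Set.toFinite _)).trans (hk i)
    _ = k * Fintype.card V := by simp [mul_comm]

section FiniteDimensional

variable {ι E : Type*} [NormedAddCommGroup E] [NormedSpace ℝ E] [FiniteDimensional ℝ E] {p : ℕ}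

theorem card_mul_pow_finrank_le_of_closedBall_subset [Fintype ι] {c : ι → E} {a : E} {s R : ℝ}
    (hs : 0 ≤ s) (hR : 0 ≤ R) (hply : HasPlyLE (fun i => closedBall (c i) s) p)
    (hsub : ∀ i, closedBall (c i) s ⊆ closedBall a R) :
    Fintype.card ι * s ^ finrank ℝ E ≤ p * R ^ finrank ℝ E := by
  borelize E
  let μ : Measure E := Measure.addHaar
  have volume_le : ENNReal.ofReal (Fintype.card ι * s ^ finrank ℝ E) * μ (ball 0 1) ≤
      ENNReal.ofReal (p * R ^ finrank ℝ E) * μ (ball 0 1) :=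
    calc ENNReal.ofReal (Fintype.card ι * s ^ finrank ℝ E) * μ (ball 0 1)
        = ∑' i, μ (closedBall (c i) s) := by
          simp [tsum_fintype, μ.addHaar_closedBall _ hs, ENNReal.ofReal_mul, mul_assoc]
      _ ≤ p * μ (closedBall a R) :=
        hply.tsum_measure_le μ (fun _ => measurableSet_closedBall) hsub
      _ = ENNReal.ofReal (p * R ^ finrank ℝ E) * μ (ball 0 1) := by
          simp [μ.addHaar_closedBall _ hR, ENNReal.ofReal_mul, mul_assoc]
  rwa [ENNReal.mul_le_mul_iff_left (measure_ball_pos μ 0 one_pos).ne' measure_ball_lt_top.ne,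
    ENNReal.ofReal_le_ofReal_iff (by positivity)] at volume_le

theorem ncard_le_of_inter_closedBall_nonempty [Finite ι] {c : ι → E} {r : ι → ℝ}
    (hply : HasPlyLE (fun i => closedBall (c i) (r i)) p) (a : E) {s : ℝ} (hs : 0 < s) :
    {j | s ≤ r j ∧ (closedBall a s ∩ closedBall (c j) (r j)).Nonempty}.ncard ≤
      3 ^ finrank ℝ E * p := by
  set S := {j | s ≤ r j ∧ (closedBall a s ∩ closedBall (c j) (r j)).Nonempty}
  have := Fintype.ofFinite S
  choose d hd using fun j : S => exists_closedBall_subset_inter_closedBall_three_mul j.2.1 j.2.2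
  have hply' : HasPlyLE (fun j => closedBall (d j) s) p :=
    hply.of_subset_comp Subtype.val_injective fun j => (hd j).trans Set.inter_subset_left
  have card_mul_le : Fintype.card S * s ^ finrank ℝ E ≤ 3 ^ finrank ℝ E * p * s ^ finrank ℝ E :=
    calc Fintype.card S * s ^ finrank ℝ E ≤ p * (3 * s) ^ finrank ℝ E :=
          card_mul_pow_finrank_le_of_closedBall_subset hs.le (by positivity) hply'
            fun j => (hd j).trans Set.inter_subset_right
      _ = 3 ^ finrank ℝ E * p * s ^ finrank ℝ E := by ring
  rw [← Nat.card_coe_set_eq, Nat.card_eq_fintype_card]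
  exact_mod_cast le_of_mul_le_mul_right card_mul_le (pow_pos hs _)

theorem disk_graph_edge_bound_general [Fintype ι] {c : ι → E} {r : ι → ℝ} (hr : ∀ i, 0 < r i)
    (hply : HasPlyLE (fun i => closedBall (c i) (r i)) p) {G : SimpleGraph ι}
    (hG : ∀ i j, G.Adj i j → (closedBall (c i) (r i) ∩ closedBall (c j) (r j)).Nonempty) :
    G.edgeSet.ncard ≤ 3 ^ finrank ℝ E * p * Fintype.card ι :=
  ncard_edgeSet_le_mul_card_of_adj_imp_or
    (fun i j hij => (le_total (r i) (r j)).imp (⟨·, hG i j hij⟩) (⟨·, hG j i hij.symm⟩))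
    fun i => ncard_le_of_inter_closedBall_nonempty hply (c i) (hr i)

end FiniteDimensional

/-- The intersection graph of a finite family of `n` closed disks in the plane
of ply at most `p` has at most `9·p·n` edges. -/
theorem disk_graph_edge_bound {ι : Type*} [Fintype ι] (n : ℕ) (hn : Fintype.card ι = n)
    (c : ι → EuclideanSpace ℝ (Fin 2)) (r : ι → ℝ) (hr : ∀ i, 0 < r i) (p : ℕ)
    (hply : ∀ x : EuclideanSpace ℝ (Fin 2),
      ({i | x ∈ Metric.closedBall (c i) (r i)} : Set ι).ncard ≤ p)
    (G : SimpleGraph ι)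
    (hG : ∀ i j, G.Adj i j ↔ i ≠ j ∧
      (Metric.closedBall (c i) (r i) ∩ Metric.closedBall (c j) (r j)).Nonempty) :
    G.edgeSet.ncard ≤ 9 * p * n := by
  simpa [hn] using disk_graph_edge_bound_general hr (HasPlyLE.iff_ncard_le.2 hply)
    fun i j hij => ((hG i j).1 hij).2
end

section
/- Let p ≥ 1 be a natural number and let N : ℕ → ℕ → ℕ be a function satisfying: N(k, m) ≤ 1 whenever k = 0 or m ≥ k; and N(k, m) ≤ N(k−1, m) + N(k, m+p) whenever k ≥ 1 and m < k. Then for all k and m, N(k, m) ≤ C(k + a, a) where a = ⌈(k − m)/p⌉ (with k − m taken as 0 when m ≥ k) and C denotes the binomial coefficient. In particular, N(k, 0) ≤ C(k + ⌈k/p⌉, ⌈k/p⌉). -/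
/-!
Let `a` be a number of marking steps after which at least `k` edges are marked, so
`k ≤ m + a * p`. Decreasing `k` by one preserves this condition for the same `a`, while marking `p`
more edges allows `a - 1`. The branching recurrence is thus dominated by Pascal's rule for
`(k + a).choose a`, and `⌈(k - m) / p⌉` is the least admissible `a`.
-/

section BranchingRecurrence

variable {M : Type*} [AddCommMonoid M] [Preorder M] [IsOrderedAddMonoid M]
  {p : ℕ} {N : ℕ → ℕ → M} {c : M}

theorem le_choose_nsmul_of_le_add_mul (hc : 0 ≤ c)
    (leaf : ∀ k m, k ≤ m → N k m ≤ c)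
    (branch : ∀ k m, m ≤ k → N (k + 1) m ≤ N k m + N (k + 1) (m + p))
    {k m a : ℕ} (h : k ≤ m + a * p) : N k m ≤ (k + a).choose a • c := by
  induction a generalizing k m with
  | zero => simpa using leaf k m (by simpa using h)
  | succ a ih_mark =>
    induction k with
    | zero => simpa using leaf 0 m m.zero_le
    | succ k ih_decrease =>
      rcases le_or_gt (k + 1) m with enough_marked | few_marked
      · calc
          N (k + 1) m ≤ c := leaf _ _ enough_marked
          _ = 1 • c := (one_nsmul c).symm
          _ ≤ (k + 1 + (a + 1)).choose (a + 1) • c :=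
            nsmul_le_nsmul_left hc (Nat.choose_pos (by lia))
      · have decreased : N k m ≤ (k + (a + 1)).choose (a + 1) • c := ih_decrease (by lia)
        have marked : N (k + 1) (m + p) ≤ (k + 1 + a).choose a • c := ih_mark (by grind)
        have pascal : (k + 1 + (a + 1)).choose (a + 1) =
            (k + (a + 1)).choose (a + 1) + (k + 1 + a).choose a := by
          grind [Nat.choose_succ_succ' (k + 1 + a) a]
        calc
          N (k + 1) m ≤ N k m + N (k + 1) (m + p) := branch k m (by lia)
          _ ≤ (k + (a + 1)).choose (a + 1) • c + (k + 1 + a).choose a • c :=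
            add_le_add decreased marked
          _ = (k + 1 + (a + 1)).choose (a + 1) • c := by rw [pascal, add_nsmul]

theorem branching_recurrence_bound_general (hp : 0 < p) (hc : 0 ≤ c)
    (leaf : ∀ k m, k ≤ m → N k m ≤ c)
    (branch : ∀ k m, m ≤ k → N (k + 1) m ≤ N k m + N (k + 1) (m + p)) (k m : ℕ) :
    N k m ≤ (k + (k - m) ⌈/⌉ p).choose ((k - m) ⌈/⌉ p) • c := by
  have enough_marks : k - m ≤ p * ((k - m) ⌈/⌉ p) := (ceilDiv_le_iff_le_mul hp).mp le_rfl
  exact le_choose_nsmul_of_le_add_mul hc leaf branch (by rw [mul_comm]; lia)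

end BranchingRecurrence

/-- The branching recurrence `N(k,m) ≤ N(k-1,m) + N(k,m+p)` with boundary
condition `N(k,m) ≤ 1` when `k = 0` or `m ≥ k` satisfies
`N(k,m) ≤ C(k + ⌈(k-m)/p⌉, ⌈(k-m)/p⌉)`; in particular `N(k,0) ≤ C(k + ⌈k/p⌉, ⌈k/p⌉)`. -/
theorem branching_recurrence_bound (p : ℕ) (hp : 1 ≤ p) (N : ℕ → ℕ → ℕ)
    (h1 : ∀ k m : ℕ, (k = 0 ∨ k ≤ m) → N k m ≤ 1)
    (h2 : ∀ k m : ℕ, 1 ≤ k → m < k → N k m ≤ N (k - 1) m + N k (m + p)) :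
    (∀ k m : ℕ, N k m ≤ Nat.choose (k + (k - m + p - 1) / p) ((k - m + p - 1) / p)) ∧
    (∀ k : ℕ, N k 0 ≤ Nat.choose (k + (k + p - 1) / p) ((k + p - 1) / p)) := by
  have bound (k m : ℕ) : N k m ≤ (k + (k - m + p - 1) / p).choose ((k - m + p - 1) / p) := by
    simpa [Nat.ceilDiv_eq_add_pred_div] using branching_recurrence_bound_general hp zero_le_one
      (fun k m hkm ↦ h1 k m (.inr hkm)) (fun k m hmk ↦ h2 (k + 1) m (by lia) (by lia)) k m
  exact ⟨bound, fun k ↦ bound k 0⟩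
end
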